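/- arXiv:1407.2597 — 9 statements merged into one kernel-verified Lean document; each statement's English description precedes it below -/
import Mathlib

section
/- Let p ≥ 2 and n ≥ 1 be integers and let U_1, …, U_p : (0,∞) → ℝ be continuous functions. For 0 ≤ j, ℓ ≤ n−1 define the bimoments I_{jℓ} = ∫_{(0,∞)^p} w_1^j · w_p^ℓ · exp(−∑_{m=1}^p U_m(w_m)) / ∏_{m=1}^{p−1}(w_m + w_{m+1}) dw_1 ⋯ dw_p, and assume each of these integrands is Lebesgue integrable on (0,∞)^p. Then the bimoment determinant Δ_n = det[I_{jℓ}]_{j,ℓ=0}^{n−1} is strictly positive. -/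
open MeasureTheory

/-!
The determinant of integrals expands, by Fubini, into a single integral over `n` independent copies
`w 0, …, w (n-1)` of the chain variable: `Δ_n = ∫ det [f j ℓ (w j)]` (`det_integral`). This measure
is invariant under permuting the `n` copies *separately at each site* `m` of the chain
(`measurePreserving_permute`), so `Δ_n` is the average of the integrals of the transformed
integrands over all families `τ` of permutations, one for each site. The sum of the transformed
integrands over `τ` factorises (`sum_perm_chain`) into a positive exponential factor times
`V(w_{•,0}) · ∏ₘ det [1 / (w_{i,m} + w_{j,m+1})] · V(w_{•,q})`, with `V` the Vandermonde
determinant and `q` the last site. By the Cauchy determinant formula (`det_cauchy`) each middle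
factor is a positive multiple of `V(w_{•,m}) V(w_{•,m+1})`, so the total is a positive multiple of
`∏ₘ V(w_{•,m})²`: it is nonnegative, and positive when the entries at each site are distinct, which
happens on a set of positive measure.

Performing the symmetrisation at all sites at once only uses integrability of the given
integrands; no iterated kernel appears.
-/

namespace CauchyChain

open Matrix Equiv

/-! ### The Cauchy determinant -/

/-- The Vandermonde product splits off the factors that contain the first variable. -/
lemma det_vandermonde_succ {n : ℕ} (x : Fin (n + 1) → ℝ) :
    (vandermonde x).det =
      (∏ i : Fin n, (x i.succ - x 0)) * (vandermonde fun i : Fin n => x i.succ).det := by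
  rw [det_vandermonde, det_vandermonde, Fin.prod_univ_succ, Fin.prod_Ioi_zero]
  congr 1
  refine Finset.prod_congr rfl fun i _ => ?_
  rw [Fin.prod_Ioi_succ]

/-- A sufficient form of the Cauchy determinant formula: the factor `Q` is `∏ᵢⱼ (xᵢ + yⱼ)⁻¹`, but
only its positivity matters. -/
lemma det_cauchy {n : ℕ} (x y : Fin n → ℝ) (hx : ∀ i, 0 < x i) (hy : ∀ i, 0 < y i) :
    ∃ Q : ℝ, 0 < Q ∧ (of fun i j => (x i + y j)⁻¹).det =
      Q * ((vandermonde x).det * (vandermonde y).det) := by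
  induction n with
  | zero => exact ⟨1, one_pos, by simp⟩
  | succ n ih =>
    obtain ⟨Q, hQ, hdet⟩ := ih (fun i => x i.succ) (fun i => y i.succ)
      (fun i => hx _) (fun i => hy _)
    have hxy : ∀ i j, 0 < x i + y j := fun i j => add_pos (hx i) (hy j)
    refine ⟨(x 0 + y 0)⁻¹ * (∏ i : Fin n, (x i.succ + y 0)⁻¹) *
      (∏ j : Fin n, (x 0 + y j.succ)⁻¹) * Q, ?_, ?_⟩
    · have h1 : 0 < ∏ i : Fin n, (x i.succ + y 0)⁻¹ :=
        Finset.prod_pos fun i _ => inv_pos.2 (hxy _ _)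
      have h2 : 0 < ∏ j : Fin n, (x 0 + y j.succ)⁻¹ :=
        Finset.prod_pos fun i _ => inv_pos.2 (hxy _ _)
      have h3 := inv_pos.2 (hxy 0 0)
      positivity
    -- Clear the first column with the pivot `(x 0 + y 0)⁻¹`; the remaining block is again a
    -- Cauchy matrix, up to row and column factors.
    · let a : Fin n → ℝ := fun i => (x i.succ - x 0) * (x i.succ + y 0)⁻¹
      let b : Fin n → ℝ := fun j => (y j.succ - y 0) * (x 0 + y j.succ)⁻¹
      let C : Matrix (Fin n) (Fin n) ℝ := of fun i j => (x i.succ + y j.succ)⁻¹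
      let B : Matrix (Fin (n + 1)) (Fin (n + 1)) ℝ :=
        of fun i j => Fin.cases ((x 0 + y j)⁻¹)
          (fun i' => Fin.cases 0 (fun j' => a i' * (b j' * C i' j')) j) i
      have hAB : (of fun i j => (x i + y j)⁻¹).det = B.det := by
        refine det_eq_of_forall_row_eq_smul_add_const
          (fun i => Fin.cases 0 (fun i' => (x 0 + y 0) * (x i'.succ + y 0)⁻¹) i) 0 rfl ?_
        intro i j
        refine Fin.cases ?_ (fun i' => ?_) i
        · simp [B]
        · refine Fin.cases ?_ (fun j' => ?_) j
          · have := (hxy 0 0).ne'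
            have := (hxy i'.succ 0).ne'
            simp [B]
            field_simp
          · have := (hxy 0 0).ne'
            have := (hxy i'.succ 0).ne'
            have := (hxy 0 j'.succ).ne'
            have := (hxy i'.succ j'.succ).ne'
            simp [B, a, b, C]
            field_simp
            ring
      have hB : B.det = (x 0 + y 0)⁻¹ * ((∏ i, a i) * ((∏ j, b j) * C.det)) := by
        rw [det_succ_column_zero, Fin.sum_univ_succ]
        have hsub : B.submatrix (Fin.succAbove 0) Fin.succ =
            of fun i j => a i * (of fun i j => b j * C i j) i j := by
          ext i j
          simp [B]
        rw [hsub, det_mul_column, det_mul_row]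
        simp [B]
      rw [hAB, hB, hdet, det_vandermonde_succ x, det_vandermonde_succ y]
      simp only [a, b, Finset.prod_mul_distrib]
      ring

/-! ### Summation over permutations at every site -/

/-- Iterated multiplicativity of the determinant along a chain: a sum over one permutation per site,
signed by the last one, factorises into the determinants of the links. -/
lemma sum_perm_chain {n q : ℕ} (A : Matrix (Fin n) (Fin n) ℝ)
    (K : Fin q → Matrix (Fin n) (Fin n) ℝ) :
    ∑ τ : Fin (q + 1) → Perm (Fin n), ((Perm.sign (τ (Fin.last q)) : ℤ) : ℝ) *
      ((∏ j, A (τ 0 j) j) * ∏ m : Fin q, ∏ j, K m (τ m.castSucc j) (τ m.succ j)) =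
    A.det * ∏ m, (K m).det := by
  induction q with
  | zero =>
    rw [← (Equiv.funUnique (Fin 1) (Perm (Fin n))).symm.sum_comp, det_apply']
    simp
  | succ q ih =>
    rw [← (Fin.snocEquiv fun _ : Fin (q + 2) => Perm (Fin n)).sum_comp, Fintype.sum_prod_type,
      Finset.sum_comm, Fin.prod_univ_castSucc, ← mul_assoc, ← ih fun m => K m.castSucc,
      Finset.sum_mul]
    refine Finset.sum_congr rfl fun τ _ => ?_
    have hK : ∑ σ : Perm (Fin n), ((Perm.sign σ : ℤ) : ℝ) *
        ∏ j, K (Fin.last q) (τ (Fin.last q) j) (σ j) =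
        ((Perm.sign (τ (Fin.last q)) : ℤ) : ℝ) * (K (Fin.last q)).det := by
      rw [← det_permute, ← det_transpose, det_apply']
      rfl
    have h0 : ∀ σ : Perm (Fin n),
        (Fin.snoc (α := fun _ : Fin (q + 2) => Perm (Fin n)) τ σ) 0 = τ 0 := fun σ =>
      Fin.snoc_castSucc (α := fun _ : Fin (q + 2) => Perm (Fin n)) σ τ 0
    have hS : ∀ (σ : Perm (Fin n)) (m : Fin q),
        (Fin.snoc (α := fun _ : Fin (q + 2) => Perm (Fin n)) τ σ) m.castSucc.succ = τ m.succ :=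
      fun σ m => by
        rw [Fin.succ_castSucc]
        exact Fin.snoc_castSucc (α := fun _ : Fin (q + 2) => Perm (Fin n)) σ τ m.succ
    calc _ = ((∏ j, A (τ 0 j) j) *
          ∏ m : Fin q, ∏ j, K m.castSucc (τ m.castSucc j) (τ m.succ j)) *
          ∑ σ : Perm (Fin n), ((Perm.sign σ : ℤ) : ℝ) *
            ∏ j, K (Fin.last q) (τ (Fin.last q) j) (σ j) := by
          rw [Finset.mul_sum]
          refine Finset.sum_congr rfl fun σ _ => ?_
          rw [Fin.prod_univ_castSucc]
          simp only [Fin.snocEquiv_apply, Fin.snoc_last, Fin.snoc_castSucc, h0, hS, Fin.succ_last]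
          ring
      _ = _ := by rw [hK]; ring

/-! ### Fubini and invariance of the product measure -/

/-- A determinant of integrals is the integral, over independent copies for the different rows, of
the determinant of the integrands. -/
lemma det_integral {X : Type*} [MeasurableSpace X] (ν : Measure X) [SigmaFinite ν] {n : ℕ}
    (g : Fin n → Fin n → X → ℝ) (hg : ∀ j l, Integrable (g j l) ν) :
    Integrable (fun w : Fin n → X => (of fun j l => g j l (w j)).det) (Measure.pi fun _ => ν) ∧
    ∫ w : Fin n → X, (of fun j l => g j l (w j)).det ∂(Measure.pi fun _ => ν) =
      (of fun j l => ∫ x, g j l x ∂ν).det := by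
  have hexp : ∀ w : Fin n → X, (of fun j l => g j l (w j)).det =
      ∑ σ : Perm (Fin n), ((Perm.sign σ : ℤ) : ℝ) * ∏ j, g j (σ j) (w j) := fun w => by
    rw [← det_transpose, det_apply']
    rfl
  have hi : ∀ σ : Perm (Fin n), Integrable (fun w : Fin n → X =>
      ((Perm.sign σ : ℤ) : ℝ) * ∏ j, g j (σ j) (w j)) (Measure.pi fun _ => ν) := fun σ =>
    (Integrable.fintype_prod (f := fun j => g j (σ j)) fun j => hg j (σ j)).const_mul _
  simp_rw [hexp]
  refine ⟨integrable_finsetSum _ fun σ _ => hi σ, ?_⟩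
  rw [integral_finsetSum _ fun σ _ => hi σ, ← det_transpose, det_apply']
  refine Finset.sum_congr rfl fun σ _ => ?_
  rw [integral_const_mul, integral_fintype_prod_eq_prod (f := fun j => g j (σ j))]
  rfl

/-- The `n`-fold product of a product measure is invariant under permuting the copies independently
at each site. -/
lemma measurePreserving_permute (n p : ℕ) (μ : Measure ℝ) [SigmaFinite μ]
    (τ : Fin p → Perm (Fin n)) :
    MeasurePreserving (fun (w : Fin n → Fin p → ℝ) i m => w (τ m i) m)
      (Measure.pi fun _ : Fin n => Measure.pi fun _ : Fin p => μ)
      (Measure.pi fun _ : Fin n => Measure.pi fun _ : Fin p => μ) := by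
  have hmeas : Measurable (fun (w : Fin n → Fin p → ℝ) i m => w (τ m i) m) := by fun_prop
  refine ⟨hmeas, ?_⟩
  symm
  refine Measure.pi_eq_generateFrom
    (C := fun _ => Set.univ.pi '' Set.univ.pi fun _ : Fin p => {s : Set ℝ | MeasurableSet s})
    (fun _ => generateFrom_pi) (fun _ => isPiSystem_pi)
    (fun _ => Measure.FiniteSpanningSetsIn.pi fun _ => μ.toFiniteSpanningSetsIn) ?_
  intro s hs
  choose t ht hts using hs
  have ht' : ∀ i m, MeasurableSet (t i m) := fun i m => ht i m (Set.mem_univ m)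
  obtain rfl : (fun i => Set.univ.pi (t i)) = s := funext hts
  rw [Measure.map_apply hmeas (MeasurableSet.univ_pi fun i => MeasurableSet.univ_pi (ht' i))]
  have hpre : (fun (w : Fin n → Fin p → ℝ) i m => w (τ m i) m) ⁻¹'
      (Set.univ.pi fun i => Set.univ.pi (t i)) =
      Set.univ.pi fun i => Set.univ.pi fun m => t ((τ m).symm i) m := by
    ext w
    simp only [Set.mem_preimage, Set.mem_univ_pi]
    constructor
    · intro h i m
      simpa using h ((τ m).symm i) m
    · intro h i m
      simpa using h (τ m i) m
  rw [hpre]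
  simp only [Measure.pi_pi]
  rw [Finset.prod_comm, Finset.prod_comm (s := Finset.univ (α := Fin n))]
  exact Finset.prod_congr rfl fun m _ => Equiv.prod_comp (τ m).symm fun i => μ (t i m)

/-! ### The symmetrised integrand -/

/-- The integrand of the bimoment `I_{jℓ}` for a chain with sites `0, …, q`. -/
noncomputable def integrand {q : ℕ} (U : Fin (q + 1) → ℝ → ℝ) (j l : ℕ) (w : Fin (q + 1) → ℝ) :
    ℝ :=
  w 0 ^ j * w (Fin.last q) ^ l * Real.exp (-(∑ m, U m (w m))) /
    ∏ m : Fin q, (w m.castSucc + w m.succ)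

/-- The sum of `det [integrand j ℓ (w j)]` over all site-wise permutations of the copies. -/
noncomputable def symmetrised {n q : ℕ} (U : Fin (q + 1) → ℝ → ℝ)
    (w : Fin n → Fin (q + 1) → ℝ) : ℝ :=
  ∑ τ : Fin (q + 1) → Perm (Fin n),
    (of fun j l : Fin n => integrand U j l fun m => w (τ m j) m).det

lemma symmetrised_eq {n q : ℕ} (U : Fin (q + 1) → ℝ → ℝ) (w : Fin n → Fin (q + 1) → ℝ) :
    symmetrised U w = Real.exp (-(∑ m, ∑ i, U m (w i m))) *
      ((vandermonde fun i => w i 0).det *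
        (∏ m : Fin q, (of fun i j => (w i m.castSucc + w j m.succ)⁻¹).det) *
        (vandermonde fun i => w i (Fin.last q)).det) := by
  rw [← sum_perm_chain (vandermonde fun i => w i 0)
    fun m : Fin q => of fun i j => (w i m.castSucc + w j m.succ)⁻¹, Finset.sum_mul,
    Finset.mul_sum, symmetrised]
  refine Finset.sum_congr rfl fun τ _ => ?_
  have hrow : (of fun j l : Fin n => integrand U j l fun m => w (τ m j) m) =
      of fun j l : Fin n => (w (τ 0 j) 0 ^ (j : ℕ) * Real.exp (-(∑ m, U m (w (τ m j) m))) *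
        ∏ m : Fin q, (w (τ m.castSucc j) m.castSucc + w (τ m.succ j) m.succ)⁻¹) *
        ((vandermonde fun i => w i (Fin.last q)).submatrix (τ (Fin.last q)) id) j l := by
    ext j l
    simp only [of_apply, integrand, submatrix_apply, vandermonde_apply, id, div_eq_mul_inv,
      Finset.prod_inv_distrib]
    ring
  have hexp : ∏ j, Real.exp (-(∑ m, U m (w (τ m j) m))) =
      Real.exp (-(∑ m, ∑ i, U m (w i m))) := by
    rw [← Real.exp_sum, Finset.sum_neg_distrib, Finset.sum_comm]
    congr 2
    exact Finset.sum_congr rfl fun m _ => Equiv.sum_comp (τ m) fun i => U m (w i m)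
  rw [hrow, det_mul_column, det_permute, Finset.prod_mul_distrib, Finset.prod_mul_distrib, hexp,
    Finset.prod_comm]
  simp only [vandermonde_apply, of_apply]
  ring

/-- At positive arguments the symmetrised integrand is a positive multiple of the product over the
sites of the squared Vandermonde determinants. -/
lemma symmetrised_eq_sq {n q : ℕ} (U : Fin (q + 1) → ℝ → ℝ) (w : Fin n → Fin (q + 1) → ℝ)
    (hw : ∀ i m, 0 < w i m) :
    ∃ Q : ℝ, 0 < Q ∧
      symmetrised U w = Q * (∏ m : Fin (q + 1), (vandermonde fun i => w i m).det) ^ 2 := by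
  choose Q hQ hdet using fun m : Fin q => det_cauchy (fun i => w i m.castSucc)
    (fun j => w j m.succ) (fun i => hw _ _) (fun j => hw _ _)
  refine ⟨Real.exp (-(∑ m, ∑ i, U m (w i m))) * ∏ m, Q m,
    mul_pos (Real.exp_pos _) (Finset.prod_pos fun m _ => hQ m), ?_⟩
  rw [symmetrised_eq, Finset.prod_congr rfl fun m _ => hdet m, Finset.prod_mul_distrib,
    Finset.prod_mul_distrib, sq]
  nth_rewrite 1 [Fin.prod_univ_succ]
  rw [Fin.prod_univ_castSucc]
  ring

/-! ### Positivity of the determinant -/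

lemma det_integrand_pos {n q : ℕ} (U : Fin (q + 1) → ℝ → ℝ)
    (hint : ∀ j l : Fin n, IntegrableOn (integrand U j l)
      (Set.univ.pi fun _ : Fin (q + 1) => Set.Ioi (0 : ℝ))) :
    0 < (of fun j l : Fin n =>
      ∫ w in Set.univ.pi fun _ : Fin (q + 1) => Set.Ioi (0 : ℝ), integrand U j l w).det := by
  set μ : Measure ℝ := volume.restrict (Set.Ioi 0) with hμ
  have hrestrict : (volume : Measure (Fin (q + 1) → ℝ)).restrict
      (Set.univ.pi fun _ => Set.Ioi (0 : ℝ)) = Measure.pi fun _ => μ := by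
    rw [volume_pi, Measure.restrict_pi_pi]
  simp only [IntegrableOn, hrestrict] at hint ⊢
  obtain ⟨hF, hFint⟩ := det_integral (Measure.pi fun _ => μ)
    (fun j l : Fin n => integrand U j l) hint
  set M : Measure (Fin n → Fin (q + 1) → ℝ) := Measure.pi fun _ => Measure.pi fun _ => μ with hM
  have hτ : ∀ τ : Fin (q + 1) → Perm (Fin n),
      Integrable (fun w : Fin n → Fin (q + 1) → ℝ =>
        (of fun j l : Fin n => integrand U j l fun m => w (τ m j) m).det) M ∧
      ∫ w : Fin n → Fin (q + 1) → ℝ,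
        (of fun j l : Fin n => integrand U j l fun m => w (τ m j) m).det ∂M =
      (of fun j l : Fin n => ∫ w, integrand U j l w ∂(Measure.pi fun _ => μ)).det := by
    intro τ
    have hT : MeasurePreserving _ M M := measurePreserving_permute n (q + 1) μ τ
    refine ⟨hT.integrable_comp_of_integrable hF, ?_⟩
    rw [← hFint]
    conv_rhs => rw [← hT.map_eq]
    rw [integral_map hT.measurable.aemeasurable (by rw [hT.map_eq]; exact hF.aestronglyMeasurable)]
  have hS : Integrable (fun w : Fin n → Fin (q + 1) → ℝ => symmetrised U w) M :=
    integrable_finsetSum _ fun τ _ => (hτ τ).1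
  have hSint : ∫ w, symmetrised U w ∂M = Fintype.card (Fin (q + 1) → Perm (Fin n)) *
      (of fun j l : Fin n => ∫ w, integrand U j l w ∂(Measure.pi fun _ => μ)).det := by
    unfold symmetrised
    rw [integral_finsetSum _ fun τ _ => (hτ τ).1, Finset.sum_congr rfl fun τ _ => (hτ τ).2]
    simp
  have hpos : ∀ᵐ w ∂M, ∀ i m, 0 < w i m := by
    have h1 : ∀ᵐ x ∂μ, 0 < x := ae_restrict_mem measurableSet_Ioi
    have h2 : ∀ᵐ v ∂(Measure.pi fun _ : Fin (q + 1) => μ), ∀ m, 0 < v m :=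
      ae_all_iff.2 fun m => Measure.tendsto_eval_ae_ae.eventually h1
    exact ae_all_iff.2 fun i => (Measure.tendsto_eval_ae_ae
      (μ := fun _ : Fin n => Measure.pi fun _ : Fin (q + 1) => μ) (i := i)).eventually h2
  have hSpos : 0 < ∫ w, symmetrised U w ∂M := by
    rw [integral_pos_iff_support_of_nonneg_ae _ hS]
    -- Confining copy `i` to `(i, i + 1)` at every site keeps the entries positive and distinct.
    · let O : Set (Fin n → Fin (q + 1) → ℝ) :=
        Set.univ.pi fun i => Set.univ.pi fun _ => Set.Ioo (i : ℝ) (i + 1)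
      have hMO : M O = 1 := by
        simp only [O, hM, Measure.pi_pi]
        refine Finset.prod_eq_one fun i _ => Finset.prod_eq_one fun m _ => ?_
        rw [hμ, Measure.restrict_apply measurableSet_Ioo, Set.inter_eq_left.2]
        · simp
        · intro x hx
          exact lt_of_le_of_lt (Nat.cast_nonneg _) hx.1
      refine lt_of_lt_of_le (by rw [hMO]; exact one_pos) (measure_mono (s := O) fun w hw => ?_)
      have hw' : ∀ (i : Fin n) m, w i m ∈ Set.Ioo ((i : ℕ) : ℝ) ((i : ℕ) + 1) := fun i m =>
        hw i (Set.mem_univ i) m (Set.mem_univ m)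
      obtain ⟨Q, hQ, h⟩ := symmetrised_eq_sq U w fun i m =>
        lt_of_le_of_lt (Nat.cast_nonneg _) (hw' i m).1
      rw [Function.mem_support, h]
      refine mul_ne_zero hQ.ne' (pow_ne_zero _ (Finset.prod_ne_zero_iff.2 fun m _ => ?_))
      rw [det_vandermonde_ne_zero_iff]
      refine StrictMono.injective fun i j hij => (hw' i m).2.trans (lt_of_le_of_lt ?_ (hw' j m).1)
      exact_mod_cast hij
    · filter_upwards [hpos] with w hw
      obtain ⟨Q, hQ, h⟩ := symmetrised_eq_sq U w hw
      rw [Pi.zero_apply, h]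
      positivity
  rw [hSint] at hSpos
  exact pos_of_mul_pos_right hSpos (Nat.cast_nonneg _)

end CauchyChain

/-- Positivity of the bimoment determinants of the Cauchy chain-matrix model. -/
theorem bimoment_det_pos (p n : ℕ) (hp : 2 ≤ p) (hn : 1 ≤ n)
    (U : Fin p → ℝ → ℝ) (hU : ∀ m, ContinuousOn (U m) (Set.Ioi 0))
    (f : ℕ → ℕ → (Fin p → ℝ) → ℝ)
    (hf : ∀ j ℓ w, f j ℓ w =
      (w ⟨0, by omega⟩) ^ j * (w ⟨p - 1, by omega⟩) ^ ℓ *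
        Real.exp (-(∑ m, U m (w m))) /
        ∏ m : Fin (p - 1),
          (w ⟨m.1, by have := m.2; omega⟩ + w ⟨m.1 + 1, by have := m.2; omega⟩))
    (hint : ∀ j ℓ : Fin n,
      IntegrableOn (f j ℓ) (Set.univ.pi fun _ : Fin p => Set.Ioi (0 : ℝ)))
    (I : ℕ → ℕ → ℝ)
    (hI : ∀ j ℓ : Fin n,
      I j ℓ = ∫ w in Set.univ.pi fun _ : Fin p => Set.Ioi (0 : ℝ), f j ℓ w) :
    0 < Matrix.det (Matrix.of fun j ℓ : Fin n => I j ℓ) := by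
  obtain ⟨q, rfl⟩ : ∃ q, p = q + 1 := ⟨p - 1, by omega⟩
  have hfU : ∀ j l, f j l = CauchyChain.integrand U j l := fun j l => funext fun w => hf j l w
  have hdet : (Matrix.of fun j ℓ : Fin n => I j ℓ) = Matrix.of fun j ℓ : Fin n =>
      ∫ w in Set.univ.pi fun _ : Fin (q + 1) => Set.Ioi (0 : ℝ),
        CauchyChain.integrand U j ℓ w := by
    ext j l
    rw [Matrix.of_apply, Matrix.of_apply, hI, hfU]
  rw [hdet]
  exact CauchyChain.det_integrand_pos U fun j l => hfU j l ▸ hint j l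
end

section
/- Let p ≥ 3 and n ≥ 1 be integers and let U_1, …, U_p : (0,∞) → ℝ be continuous. For x, y > 0 define η_p(x,y) = ∫_{(0,∞)^{p−2}} [e^{−U_1(x)}/(x+ξ_1)] · [exp(−∑_{j=2}^{p−1} U_j(ξ_{j−1})) / ∏_{j=1}^{p−3}(ξ_j+ξ_{j+1})] · [e^{−U_p(y)}/(ξ_{p−2}+y)] dξ_1 ⋯ dξ_{p−2}. Let 0 < x_1 < x_2 < ⋯ < x_n and 0 < y_1 < y_2 < ⋯ < y_n, and assume that for every pair (i,j) the integrand defining η_p(x_i, y_j) is Lebesgue integrable on (0,∞)^{p−2}. Then det[η_p(x_i, y_j)]_{i,j=1}^n > 0; in particular η_p is a totally positive kernel on (0,∞)². -/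
open MeasureTheory

/-!
Up to positive factors depending on `x` or `y` alone, which only rescale rows and columns of the
determinant, `η_p` is the integral of a chain of Cauchy kernels `1 / (s + t)` with positive interior
weights. Its strict total positivity follows by induction on the number of intermediate points.

* Without intermediate points the kernel is the Cauchy kernel, whose determinants at increasing
  nodes are positive by Gaussian elimination (`cauchy_det_pos`).
* With one more intermediate point, Fubini's theorem writes the kernel as
  `∫ 1 / (x + s) * (w s * L s y) ds`, where `L` is the kernel of the shorter chain. Andréief's
  identity, the continuous Cauchy-Binet formula, expresses `n!` times the determinant as the
  integral of a product of two determinants (`det_integral_pos`). At almost every tuple of nodes the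
  entries are distinct and the integrals defining `L` converge. Sorting the nodes multiplies both
  determinants by the same sign, so the product is positive (`det_mul_det_pos_of_sorted`), and so is
  the integral.
-/

/-- The Cauchy kernel is strictly totally positive. Eliminating the first column leaves the Cauchy
matrix of the remaining nodes, up to positive row and column factors. -/
theorem cauchy_det_pos : ∀ (n : ℕ) (x y : Fin n → ℝ), (∀ i, 0 < x i) → (∀ i, 0 < y i) →
    StrictMono x → StrictMono y →
    0 < Matrix.det (Matrix.of fun i j : Fin n => 1 / (x i + y j)) := by
  intro n
  induction n with
  | zero => intro x y _ _ _ _; simp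
  | succ n ih =>
    intro x y hx0 hy0 hx hy
    have hpos : ∀ i j, 0 < x i + y j := fun i j => add_pos (hx0 i) (hy0 j)
    -- `c` holds the multiples of row `0` that clear the first column.
    set c : Fin (n + 1) → ℝ := fun i => if i = 0 then 0 else (x 0 + y 0) / (x i + y 0) with hc
    set B : Matrix (Fin (n + 1)) (Fin (n + 1)) ℝ :=
      Matrix.of fun i j => 1 / (x i + y j) - c i * (1 / (x 0 + y j)) with hB
    have hAB : Matrix.det (Matrix.of fun i j => 1 / (x i + y j)) = B.det := by
      refine Matrix.det_eq_of_forall_row_eq_smul_add_const c 0 (by simp [hc]) ?_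
      intro i j
      simp [hB, hc]
    have hB0 : ∀ i : Fin n, B i.succ 0 = 0 := by
      intro i
      have h1 := (hpos i.succ 0).ne'
      have h2 := (hpos 0 0).ne'
      simp only [hB, hc, Matrix.of_apply, Fin.succ_ne_zero, if_false]
      field_simp
      ring
    have hsub : B.submatrix Fin.succ Fin.succ =
        Matrix.of fun i j : Fin n => ((x i.succ - x 0) / (x i.succ + y 0)) *
          (Matrix.of fun i j : Fin n => ((y j.succ - y 0) / (x 0 + y j.succ)) *
            (Matrix.of fun i j : Fin n => 1 / (x i.succ + y j.succ)) i j) i j := by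
      ext i j
      have h1 := (hpos i.succ 0).ne'
      have h2 := (hpos 0 j.succ).ne'
      have h3 := (hpos i.succ j.succ).ne'
      simp only [hB, hc, Matrix.of_apply, Fin.succ_ne_zero, if_false, Matrix.submatrix_apply]
      field_simp
      ring
    have hdet : B.det = B 0 0 * (B.submatrix Fin.succ Fin.succ).det := by
      rw [Matrix.det_succ_column_zero, Fin.sum_univ_succ]
      simp [hB0]
    rw [hAB, hdet, hsub, Matrix.det_mul_column, Matrix.det_mul_row]
    refine mul_pos ?_ (mul_pos ?_ (mul_pos ?_ ?_))
    · simpa [hB, hc] using hpos 0 0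
    · exact Finset.prod_pos fun i _ =>
        div_pos (sub_pos.2 (hx (Fin.succ_pos i))) (hpos _ _)
    · exact Finset.prod_pos fun i _ =>
        div_pos (sub_pos.2 (hy (Fin.succ_pos i))) (hpos _ _)
    · exact ih (fun i => x i.succ) (fun i => y i.succ) (fun i => hx0 _) (fun i => hy0 _)
        (hx.comp (Fin.strictMono_succ)) (hy.comp (Fin.strictMono_succ))

/-- Lebesgue measure on the positive half-line. -/
noncomputable def halfLine : Measure ℝ := volume.restrict (Set.Ioi 0)

noncomputable instance : SigmaFinite halfLine := by unfold halfLine; infer_instance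

theorem halfLine_pi (m : ℕ) : Measure.pi (fun _ : Fin m => halfLine) =
    volume.restrict (Set.univ.pi fun _ : Fin m => Set.Ioi (0 : ℝ)) :=
  (Measure.restrict_pi_pi (fun _ : Fin m => (volume : Measure ℝ)) _).symm

/-- Diagonals are null sets, so almost every tuple of nodes is a tuple of distinct ones. -/
theorem ae_pi_injective (n : ℕ) :
    ∀ᵐ t ∂Measure.pi (fun _ : Fin n => halfLine), Function.Injective t := by
  rw [halfLine_pi]
  refine ae_restrict_of_ae ?_
  have : ∀ i j : Fin n, i ≠ j → ∀ᵐ t : Fin n → ℝ, t i ≠ t j := by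
    intro i j hij
    let φ : (Fin n → ℝ) →ₗ[ℝ] ℝ := 
      LinearMap.proj (R := ℝ) (φ := fun _ : Fin n => ℝ) i - LinearMap.proj j
    have h := Measure.addHaar_submodule (volume : Measure (Fin n → ℝ)) (LinearMap.ker φ) (by
      intro htop
      have : (Pi.single i (1 : ℝ) : Fin n → ℝ) ∈ LinearMap.ker φ := htop ▸ Submodule.mem_top
      simp [φ, LinearMap.mem_ker, hij.symm] at this)
    rw [ae_iff]
    convert h using 2
    ext t
    simp [φ, LinearMap.mem_ker, sub_eq_zero]
  have h2 : ∀ᵐ t : Fin n → ℝ, ∀ i j : Fin n, i ≠ j → t i ≠ t j := by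
    simp only [ae_all_iff]
    exact this
  filter_upwards [h2] with t ht i j hij
  by_contra hne
  exact ht i j hne hij

theorem ae_pi_forall {n : ℕ} {P : ℝ → Prop} (h : ∀ᵐ s ∂halfLine, P s) :
    ∀ᵐ t ∂Measure.pi (fun _ : Fin n => halfLine), ∀ k, P (t k) := by
  rw [ae_all_iff]
  intro k
  exact (Measure.quasiMeasurePreserving_eval (μ := fun _ : Fin n => halfLine) k).ae h

/-- Positivity form of Andréief's identity
`n! * det [∫ f i * h j] = ∫ det [f i (t k)] * det [h j (t k)] dt`. -/
theorem det_integral_pos {n : ℕ} (f h : Fin n → ℝ → ℝ)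
    (hint : ∀ i j, Integrable (fun s => f i s * h j s) halfLine)
    (hpos : ∀ᵐ t ∂Measure.pi (fun _ : Fin n => halfLine),
      0 < (Matrix.of fun i k => f i (t k)).det * (Matrix.of fun k j => h j (t k)).det) :
    0 < Matrix.det (Matrix.of fun i j : Fin n => ∫ s, f i s * h j s ∂halfLine) := by
  set ν := Measure.pi (fun _ : Fin n => halfLine) with hν
  -- Keeping only the diagonal term of the second determinant, the integral is computed termwise;
  -- summing over all permutations of the nodes restores the product of the two determinants.
  set F : (Fin n → ℝ) → ℝ := fun t => (Matrix.of fun i k => f i (t k)).det * ∏ k, h k (t k) with hF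
  have hFexp : F = fun t => ∑ σ : Equiv.Perm (Fin n),
      ((Equiv.Perm.sign σ : ℤ) : ℝ) * ∏ k, (fun s => f (σ k) s * h k s) (t k) := by
    funext t
    simp only [hF, Matrix.det_apply', Matrix.of_apply, Finset.sum_mul, Finset.prod_mul_distrib,
      mul_assoc]
  have hprodint : ∀ σ : Equiv.Perm (Fin n), Integrable
      (fun t : Fin n → ℝ => ((Equiv.Perm.sign σ : ℤ) : ℝ) *
        ∏ k, (fun s => f (σ k) s * h k s) (t k)) ν := fun σ =>
    (Integrable.fintype_prod (f := fun k s => f (σ k) s * h k s)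
      (fun k => hint (σ k) k)).const_mul _
  have hFint : Integrable F ν := by
    rw [hFexp]
    exact integrable_finsetSum _ fun σ _ => hprodint σ
  have hFval : ∫ t, F t ∂ν =
      Matrix.det (Matrix.of fun i j : Fin n => ∫ s, f i s * h j s ∂halfLine) := by
    rw [hFexp, integral_finsetSum _ fun σ _ => hprodint σ, Matrix.det_apply']
    refine Finset.sum_congr rfl fun σ _ => ?_
    rw [integral_const_mul, hν, integral_fintype_prod_eq_prod (fun k s => f (σ k) s * h k s)]
    rfl
  have hmp : ∀ τ : Equiv.Perm (Fin n), MeasurePreserving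
      (MeasurableEquiv.piCongrLeft (fun _ : Fin n => ℝ) τ.symm) ν ν := fun τ =>
    measurePreserving_piCongrLeft (fun _ : Fin n => halfLine) τ.symm
  have hcomp : ∀ (τ : Equiv.Perm (Fin n)) (t : Fin n → ℝ),
      MeasurableEquiv.piCongrLeft (fun _ : Fin n => ℝ) τ.symm t = fun k => t (τ k) := by
    intro τ t
    funext k
    have := Equiv.piCongrLeft_apply_apply (fun _ : Fin n => ℝ) τ.symm t (τ k)
    rw [Equiv.symm_apply_apply] at this
    rw [MeasurableEquiv.coe_piCongrLeft]
    exact this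
  have hτint : ∀ τ : Equiv.Perm (Fin n), Integrable (fun t => F (fun k => t (τ k))) ν := by
    intro τ
    have := (hmp τ).integrable_comp_of_integrable hFint
    refine this.congr (Filter.Eventually.of_forall fun t => ?_)
    simp only [Function.comp, hcomp]
  have hτval : ∀ τ : Equiv.Perm (Fin n), ∫ t, F (fun k => t (τ k)) ∂ν = ∫ t, F t ∂ν := by
    intro τ
    have := (hmp τ).integral_comp' F
    simpa only [hcomp] using this
  have hsum : ∀ t : Fin n → ℝ, ∑ τ : Equiv.Perm (Fin n), F (fun k => t (τ k)) =
      (Matrix.of fun i k => f i (t k)).det * (Matrix.of fun k j => h j (t k)).det := by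
    intro t
    rw [Matrix.det_apply' (Matrix.of fun k j => h j (t k)), Finset.mul_sum]
    refine Finset.sum_congr rfl fun τ _ => ?_
    have := Matrix.det_permute' τ (Matrix.of fun i k => f i (t k))
    have h2 : (Matrix.of fun i k => f i (t (τ k))) =
      (Matrix.of fun i k => f i (t k)).submatrix id τ := rfl
    simp only [hF]
    rw [h2, this]
    simp only [Matrix.of_apply]
    ring
  have hν0 : ν ≠ 0 := by
    rw [← Measure.measure_univ_ne_zero, hν, Measure.pi_univ]
    simp [halfLine]
  have htot : 0 < ∫ t, ∑ τ : Equiv.Perm (Fin n), F (fun k => t (τ k)) ∂ν := by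
    rw [integral_pos_iff_support_of_nonneg_ae]
    · rw [pos_iff_ne_zero]
      intro h0
      apply hν0
      rw [← ae_eq_bot, ← Filter.empty_mem_iff_bot]
      have h1 : ∀ᵐ t ∂ν, ∑ τ : Equiv.Perm (Fin n), F (fun k => t (τ k)) = 0 := by
        rw [ae_iff]; exact h0
      filter_upwards [hpos, h1] with t ht ht1
      rw [← hsum, ht1] at ht
      exact (lt_irrefl _ ht).elim
    · filter_upwards [hpos] with t ht
      rw [hsum]
      exact ht.le
    · exact integrable_finsetSum _ fun τ _ => hτint τ
  rw [integral_finsetSum _ fun τ _ => hτint τ] at htot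
  simp only [hτval, hFval, Finset.sum_const, nsmul_eq_mul] at htot
  exact pos_of_mul_pos_right htot (Nat.cast_nonneg _)

/-- If the minors of two kernels at sorted nodes are positive, then the product of the minors at
arbitrary distinct nodes is positive, since sorting changes both by the same sign. -/
theorem det_mul_det_pos_of_sorted {n : ℕ} (f h : Fin n → ℝ → ℝ) (t : Fin n → ℝ)
    (hinj : Function.Injective t)
    (hf : ∀ σ : Equiv.Perm (Fin n), StrictMono (t ∘ σ) →
      0 < (Matrix.of fun i k => f i (t (σ k))).det)
    (hh : ∀ σ : Equiv.Perm (Fin n), StrictMono (t ∘ σ) →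
      0 < (Matrix.of fun k j => h j (t (σ k))).det) :
    0 < (Matrix.of fun i k => f i (t k)).det * (Matrix.of fun k j => h j (t k)).det := by
  set σ := Tuple.sort t
  have hσ : StrictMono (t ∘ σ) :=
    (Tuple.monotone_sort t).strictMono_of_injective (hinj.comp σ.injective)
  have h1 := hf σ hσ
  have h2 := hh σ hσ
  have e1 : (Matrix.of fun i k => f i (t (σ k))) =
    (Matrix.of fun i k => f i (t k)).submatrix id σ := rfl
  have e2 : (Matrix.of fun k j => h j (t (σ k))) =
    (Matrix.of fun k j => h j (t k)).submatrix σ id := rfl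
  rw [e1, Matrix.det_permute'] at h1
  rw [e2, Matrix.det_permute] at h2
  have h3 := mul_pos h1 h2
  have hs : ((Equiv.Perm.sign σ : ℤ) : ℝ) * ((Equiv.Perm.sign σ : ℤ) : ℝ) = 1 := by
    rw [← Int.cast_mul, ← Units.val_mul, Int.units_mul_self]; simp
  rwa [mul_mul_mul_comm, hs, one_mul] at h3

/-- The integrand of the chain of Cauchy kernels with `m` interior weights `w`, joining `x`
to `y` through the intermediate points `ξ`; for `m = 0` it is the Cauchy kernel itself. -/
noncomputable def chain : (m : ℕ) → (Fin m → ℝ → ℝ) → ℝ → ℝ → (Fin m → ℝ) → ℝ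
  | 0, _, x, y, _ => 1 / (x + y)
  | m + 1, w, x, y, ξ =>
    1 / (x + ξ 0) * (w 0 (ξ 0) * chain m (fun j => w j.succ) (ξ 0) y (fun j => ξ j.succ))

/-- The closed form of the chain integrand, in the shape used to define `η_p`. -/
theorem chain_eq (m : ℕ) (w : Fin (m + 1) → ℝ → ℝ) (x y : ℝ) (ξ : Fin (m + 1) → ℝ) :
    chain (m + 1) w x y ξ = 1 / (x + ξ 0) *
      ((∏ j, w j (ξ j)) / ∏ j : Fin m, (ξ j.castSucc + ξ j.succ)) *
      (1 / (ξ (Fin.last m) + y)) := by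
  induction m generalizing x with
  | zero => simp [chain]; ring
  | succ m ih =>
    rw [chain, ih, Fin.prod_univ_succ (fun j => w j (ξ j)),
      Fin.prod_univ_succ (fun j : Fin (m + 1) => ξ j.castSucc + ξ j.succ)]
    simp only [Fin.castSucc_zero, Fin.succ_last, Fin.succ_castSucc, div_eq_mul_inv, mul_inv]
    ring

/-- Strict total positivity of the integrated chain, by induction on its length: splitting off the
first intermediate point writes the kernel as a composition of the Cauchy kernel with the integrated
chain of length one less, whose defining integral converges for almost every starting point. -/
theorem chain_det_pos (m : ℕ) : ∀ (w : Fin m → ℝ → ℝ), (∀ j s, 0 < w j s) →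
    ∀ (n : ℕ) (x y : Fin n → ℝ), (∀ i, 0 < x i) → (∀ i, 0 < y i) →
    StrictMono x → StrictMono y →
    (∀ i j, Integrable (chain m w (x i) (y j)) (Measure.pi fun _ : Fin m => halfLine)) →
    0 < Matrix.det (Matrix.of fun i j : Fin n =>
      ∫ ξ, chain m w (x i) (y j) ξ ∂(Measure.pi fun _ : Fin m => halfLine)) := by
  induction m with
  | zero =>
    intro w _ n x y hx0 hy0 hx hy _
    have := cauchy_det_pos n x y hx0 hy0 hx hy
    simpa [chain, Measure.pi_of_empty, Measure.real] using this
  | succ m ih =>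
    intro w hw n x y hx0 hy0 hx hy hint
    set μm := Measure.pi fun _ : Fin m => halfLine with hμm
    set w' : Fin m → ℝ → ℝ := fun j => w j.succ
    have hmp : MeasurePreserving (MeasurableEquiv.piFinSuccAbove (fun _ : Fin (m + 1) => ℝ) 0)
        (Measure.pi fun _ : Fin (m + 1) => halfLine) (halfLine.prod μm) :=
      measurePreserving_piFinSuccAbove (fun _ : Fin (m + 1) => halfLine) 0
    set k : Fin n → Fin n → ℝ × (Fin m → ℝ) → ℝ := fun i j q =>
      1 / (x i + q.1) * (w 0 q.1 * chain m w' q.1 (y j) q.2) with hk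
    have hkc : ∀ i j, chain (m + 1) w (x i) (y j) =
        k i j ∘ MeasurableEquiv.piFinSuccAbove (fun _ : Fin (m + 1) => ℝ) 0 := by
      intro i j
      funext ξ
      rfl
    have hkint : ∀ i j, Integrable (k i j) (halfLine.prod μm) := by
      intro i j
      have := hint i j
      rw [hkc] at this
      exact (hmp.integrable_comp_emb (MeasurableEquiv.measurableEmbedding _)).1 this
    set L : Fin n → ℝ → ℝ := fun j s => ∫ ζ, chain m w' s (y j) ζ ∂μm with hL
    have hinner : ∀ i j s, ∫ ζ, k i j (s, ζ) ∂μm = 1 / (x i + s) * (w 0 s * L j s) := by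
      intro i j s
      simp only [hk, hL, integral_const_mul]
    have hval : ∀ i j, ∫ ξ, chain (m + 1) w (x i) (y j) ξ
        ∂(Measure.pi fun _ : Fin (m + 1) => halfLine) =
        ∫ s, 1 / (x i + s) * (w 0 s * L j s) ∂halfLine := by
      intro i j
      rw [hkc]
      simp only [Function.comp]
      rw [hmp.integral_comp' (k i j), integral_prod _ (hkint i j)]
      simp only [hinner]
    simp only [hval]
    have hs0 : ∀ᵐ s ∂halfLine, 0 < s := ae_restrict_mem measurableSet_Ioi
    have hgood : ∀ᵐ s ∂halfLine, ∀ i j : Fin n, Integrable (fun ζ => k i j (s, ζ)) μm := by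
      simp only [ae_all_iff]
      exact fun i j => (hkint i j).prod_right_ae
    refine det_integral_pos (fun i s => 1 / (x i + s)) (fun j s => w 0 s * L j s) ?_ ?_
    · intro i j
      have := (hkint i j).integral_prod_left
      simpa only [hinner] using this
    · filter_upwards [ae_pi_injective n, ae_pi_forall hs0, ae_pi_forall hgood]
        with t hinj ht0 htg
      refine det_mul_det_pos_of_sorted (fun i s => 1 / (x i + s))
        (fun j s => w 0 s * L j s) t hinj ?_ ?_
      · intro σ hσ
        exact cauchy_det_pos n x (t ∘ σ) hx0 (fun i => ht0 _) hx hσ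
      · intro σ hσ
        have := ih w' (fun j s => hw _ s) n (t ∘ σ) y (fun i => ht0 _) hy0 hσ hy ?_
        · have h2 := Matrix.det_mul_column (fun l => w 0 (t (σ l)))
            (Matrix.of fun l j => L j (t (σ l)))
          simp only [Matrix.of_apply] at h2
          rw [h2]
          exact mul_pos (Finset.prod_pos fun l _ => hw _ _) this
        · intro l j
          have h1 := htg (σ l) l j
          have hne : 1 / (x l + t (σ l)) ≠ 0 :=
            (one_div_pos.2 (add_pos (hx0 _) (ht0 _))).ne'
          simp only [hk] at h1
          -- The slice differs from the shorter chain by a nonzero constant factor.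
          have h3 := (h1.const_mul (1 / (x l + t (σ l)))⁻¹).const_mul (w 0 (t (σ l)))⁻¹
          refine h3.congr (Filter.Eventually.of_forall fun ζ => ?_)
          simp only [inv_mul_cancel_left₀ hne, inv_mul_cancel_left₀ (hw 0 (t (σ l))).ne']
          rfl

/-- Total positivity of the convolved Cauchy kernel `η_p` of the Cauchy chain of length `p ≥ 3`. -/
theorem eta_p_totally_positive (p n : ℕ) (hp : 3 ≤ p) (hn : 1 ≤ n)
    (U : Fin p → ℝ → ℝ) (hU : ∀ m, ContinuousOn (U m) (Set.Ioi 0))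
    (g : ℝ → ℝ → (Fin (p - 2) → ℝ) → ℝ)
    (hg : ∀ x y ξ, g x y ξ =
      (Real.exp (-(U ⟨0, by omega⟩ x)) / (x + ξ ⟨0, by omega⟩)) *
        (Real.exp (-(∑ j : Fin (p - 2), U ⟨j.1 + 1, by have := j.2; omega⟩ (ξ j))) /
          ∏ j : Fin (p - 3),
            (ξ ⟨j.1, by have := j.2; omega⟩ + ξ ⟨j.1 + 1, by have := j.2; omega⟩)) *
        (Real.exp (-(U ⟨p - 1, by omega⟩ y)) / (ξ ⟨p - 3, by omega⟩ + y)))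
    (η : ℝ → ℝ → ℝ)
    (hη : ∀ x y, η x y =
      ∫ ξ in Set.univ.pi fun _ : Fin (p - 2) => Set.Ioi (0 : ℝ), g x y ξ)
    (x y : Fin n → ℝ) (hx0 : ∀ i, 0 < x i) (hy0 : ∀ i, 0 < y i)
    (hx : StrictMono x) (hy : StrictMono y)
    (hint : ∀ i j : Fin n,
      IntegrableOn (g (x i) (y j)) (Set.univ.pi fun _ : Fin (p - 2) => Set.Ioi (0 : ℝ))) :
    0 < Matrix.det (Matrix.of fun i j : Fin n => η (x i) (y j)) := by
  obtain ⟨m, rfl⟩ : ∃ m, p = m + 3 := ⟨p - 3, by omega⟩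
  set a : Fin n → ℝ := fun i => Real.exp (-(U ⟨0, by omega⟩ (x i))) with ha
  set b : Fin n → ℝ := fun j => Real.exp (-(U ⟨m + 3 - 1, by omega⟩ (y j))) with hb
  have ha0 : ∀ i, 0 < a i := fun i => Real.exp_pos _
  have hb0 : ∀ i, 0 < b i := fun i => Real.exp_pos _
  let w : Fin (m + 1) → ℝ → ℝ := fun j s => Real.exp (-(U ⟨j.1 + 1, by have := j.2; omega⟩ s))
  have hgc : ∀ i j (ξ : Fin (m + 1) → ℝ),
      g (x i) (y j) ξ = a i * (b j * chain (m + 1) w (x i) (y j) ξ) := by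
    intro i j ξ
    have hprod : ∏ l, w l (ξ l) = Real.exp (-(∑ l : Fin (m + 1),
        U ⟨l.1 + 1, by have := l.2; omega⟩ (ξ l))) := by
      rw [← Finset.sum_neg_distrib, Real.exp_sum]
    rw [hg, chain_eq, hprod]
    change a i / (x i + ξ 0) * (_ / ∏ l : Fin m, (ξ l.castSucc + ξ l.succ)) *
      (b j / (ξ (Fin.last m) + y j)) = _
    simp only [div_eq_mul_inv]
    change a i * _ * (Real.exp (-(∑ l : Fin (m + 1),
        U ⟨l.1 + 1, by have := l.2; omega⟩ (ξ l))) * _) * _ = _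
    ring
  have hci : ∀ i j, Integrable (chain (m + 1) w (x i) (y j))
      (Measure.pi fun _ : Fin (m + 1) => halfLine) := by
    intro i j
    rw [halfLine_pi]
    have h3 := ((hint i j).const_mul (a i)⁻¹).const_mul (b j)⁻¹
    refine Integrable.congr h3 (Filter.Eventually.of_forall fun ξ => ?_)
    change (b j)⁻¹ * ((a i)⁻¹ * g (x i) (y j) ξ) = _
    rw [hgc, inv_mul_cancel_left₀ (ha0 i).ne', inv_mul_cancel_left₀ (hb0 j).ne']
  have hηc : ∀ i j, η (x i) (y j) = a i * (Matrix.of fun i j => b j *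
      (Matrix.of fun i j => ∫ ξ, chain (m + 1) w (x i) (y j) ξ
        ∂(Measure.pi fun _ : Fin (m + 1) => halfLine)) i j) i j := by
    intro i j
    rw [hη, halfLine_pi]
    simp only [Matrix.of_apply, ← integral_const_mul]
    exact integral_congr_ae (Filter.Eventually.of_forall fun ξ => hgc i j ξ)
  simp only [hηc]
  rw [Matrix.det_mul_column, Matrix.det_mul_row]
  exact mul_pos (Finset.prod_pos fun i _ => ha0 i) (mul_pos (Finset.prod_pos fun i _ => hb0 i)
    (chain_det_pos (m + 1) w (fun j s => Real.exp_pos _) n x y hx0 hy0 hx hy hci))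
end

section
/- Let n ≥ 1 and let 0 < x_1 < x_2 < ⋯ < x_n and 0 < y_1 < y_2 < ⋯ < y_n be real numbers. Then det[1/(x_i + y_j)]_{i,j=1}^n > 0. -/
/-!
Induction on the size by one step of Gaussian elimination. Clearing the first column of the matrix
`1 / (x i + y j)` with its first row leaves, in the complementary block, the Schur complement
`(x i - x 0) / (x i + y 0) * ((y j - y 0) / (x 0 + y j)) * (1 / (x i + y j))`,
a smaller Cauchy matrix whose rows and columns are rescaled by positive factors.
-/

/-- The recursion behind the Cauchy determinant formula. -/
lemma cauchy_det_succ {n : ℕ} (x y : Fin (n + 1) → ℝ) (h : ∀ i j, x i + y j ≠ 0) :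
    Matrix.det (Matrix.of fun i j : Fin (n + 1) => 1 / (x i + y j)) =
      1 / (x 0 + y 0) * ((∏ i : Fin n, (x i.succ - x 0) / (x i.succ + y 0)) *
        ((∏ j : Fin n, (y j.succ - y 0) / (x 0 + y j.succ)) *
          Matrix.det (Matrix.of fun i j : Fin n => 1 / (x i.succ + y j.succ)))) := by
  -- The multiple of row `0` removed from row `i`; no multiple of row `0` is removed from itself.
  let c : Fin (n + 1) → ℝ := Fin.cons 0 fun i => (x 0 + y 0) / (x i.succ + y 0)
  let B : Matrix (Fin (n + 1)) (Fin (n + 1)) ℝ :=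
    Matrix.of fun i j => 1 / (x i + y j) - c i * (1 / (x 0 + y j))
  have hB : Matrix.det (Matrix.of fun i j : Fin (n + 1) => 1 / (x i + y j)) = B.det := by
    refine Matrix.det_eq_of_forall_row_eq_smul_add_const c 0 rfl fun i j => ?_
    simp [B, c]
  have hcol : ∀ i : Fin n, B i.succ 0 = 0 := by
    intro i
    have h1 := h i.succ 0
    have h2 := h 0 0
    simp only [B, c, Matrix.of_apply, Fin.cons_succ]
    field_simp
    ring
  have hsub : B.submatrix Fin.succ Fin.succ =
      Matrix.of fun i j : Fin n => (x i.succ - x 0) / (x i.succ + y 0) *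
        (Matrix.of fun i j : Fin n => (y j.succ - y 0) / (x 0 + y j.succ) *
          (Matrix.of fun i j : Fin n => 1 / (x i.succ + y j.succ)) i j) i j := by
    ext i j
    have h1 := h i.succ 0
    have h2 := h 0 j.succ
    have h3 := h i.succ j.succ
    simp only [B, c, Matrix.of_apply, Matrix.submatrix_apply, Fin.cons_succ]
    field_simp
    ring
  rw [hB, Matrix.det_succ_column_zero, Fin.sum_univ_succ]
  simp only [hcol, mul_zero, zero_mul, Finset.sum_const_zero, add_zero, Fin.succAbove_zero]
  rw [hsub, Matrix.det_mul_column, Matrix.det_mul_row]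
  simp [B, c]

/-- Total positivity of the Cauchy kernel `K(x,y) = 1/(x+y)` on `(0,∞)²`. -/
theorem cauchy_kernel_det_pos (n : ℕ) (hn : 1 ≤ n) (x y : Fin n → ℝ)
    (hx0 : ∀ i, 0 < x i) (hy0 : ∀ i, 0 < y i)
    (hx : StrictMono x) (hy : StrictMono y) :
    0 < Matrix.det (Matrix.of fun i j : Fin n => 1 / (x i + y j)) := by
  -- The empty determinant is `1`, so the induction can start at `n = 0`.
  clear hn
  induction n with
  | zero => simp
  | succ n ih =>
    have hpos : ∀ i j, 0 < x i + y j := fun i j => add_pos (hx0 i) (hy0 j)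
    rw [cauchy_det_succ x y fun i j => (hpos i j).ne']
    refine mul_pos (one_div_pos.2 (hpos 0 0)) (mul_pos ?_ (mul_pos ?_ ?_))
    · exact Finset.prod_pos fun i _ => div_pos (sub_pos.2 (hx i.succ_pos)) (hpos _ _)
    · exact Finset.prod_pos fun j _ => div_pos (sub_pos.2 (hy j.succ_pos)) (hpos _ _)
    · exact ih (fun i => x i.succ) (fun j => y j.succ) (fun i => hx0 _) (fun j => hy0 _)
        (hx.comp (Fin.strictMono_succ)) (hy.comp (Fin.strictMono_succ))
end

section
/- Let I : ℕ × ℕ → ℝ be a doubly indexed family of real numbers (bimoments) and for k ≥ 1 set Δ_k = det[I_{jℓ}]_{j,ℓ=0}^{k−1}. Fix n, m ∈ ℕ with Δ_n ≠ 0 and Δ_m ≠ 0, and define the polynomials ψ_n(x) = (1/Δ_n)·det of the (n+1)×(n+1) matrix whose (j,ℓ) entry is I_{jℓ} for 0 ≤ ℓ ≤ n−1 and whose last column is (x^j)_{j=0}^n, and φ_m(y) = (1/Δ_m)·det of the (m+1)×(m+1) matrix whose (j,ℓ) entry is I_{jℓ} for 0 ≤ j ≤ m−1 and whose last row is (y^ℓ)_{ℓ=0}^m.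 Let B be the bilinear pairing on polynomials defined on coefficients by B(∑_j c_j x^j, ∑_k d_k y^k) = ∑_{j,k} c_j d_k I_{jk}. Then ψ_n and φ_m are monic of degrees n and m respectively, and B(ψ_n, φ_m) = δ_{nm} · Δ_{n+1}/Δ_n. -/
/-!
Expanding the determinant of `ψ_n` along its last column shows that its coefficients are the
cofactors of that column, divided by `Δ_n`. The top cofactor is `Δ_n`, so `ψ_n` is monic of degree
`n`; and pairing the coefficients with a sequence `v` amounts to putting `v` in the last column.
For `v = (I_{jk})_j` the resulting determinant has a repeated column when `k < n`, and it is
`Δ_{n+1}` when `k = n`. Hence `ψ_n` is orthogonal to `y^k` for `k < n` and pairs with `y^n` to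
`Δ_{n+1} / Δ_n` (`monic_orthogonal`). The same lemma for the transposed moments `I_{ℓj}` covers
`φ_m`. The pairing `B(ψ_n, φ_m)` is then evaluated by summing first over the coefficients of the
polynomial of larger degree.
-/

/-- The coefficients `c j` are the cofactors of the last column, so they do not depend on the
entries of that column. -/
lemma exists_cofactors (I : ℕ → ℕ → ℝ) (n : ℕ) :
    ∃ c : ℕ → ℝ, c n = Matrix.det (Matrix.of fun j ℓ : Fin n => I j ℓ) ∧
      Matrix.det (Matrix.of fun j ℓ : Fin (n + 1) =>
        if (ℓ : ℕ) = n then (Polynomial.X : Polynomial ℝ) ^ (j : ℕ) else Polynomial.C (I j ℓ)) =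
          ∑ j ∈ Finset.range (n + 1), Polynomial.C (c j) * Polynomial.X ^ j ∧
      ∀ v : ℕ → ℝ, ∑ j ∈ Finset.range (n + 1), c j * v j =
        Matrix.det (Matrix.of fun j ℓ : Fin (n + 1) => if (ℓ : ℕ) = n then v j else I j ℓ) := by
  -- Defined for all natural `j`, with the row index reduced modulo `n + 1`; only `j ≤ n` matters.
  refine ⟨fun j => (-1) ^ (j + n) * Matrix.det (Matrix.of fun a b : Fin n =>
    I ((Fin.ofNat (n + 1) j).succAbove a) b), ?_, ?_, ?_⟩
  · simp [← two_mul]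
  · rw [Matrix.det_succ_column _ (Fin.last n), Finset.sum_range]
    refine Finset.sum_congr rfl fun j _ => ?_
    have h : Fin.ofNat (n + 1) (j : ℕ) = j := by ext; simp
    have hd : ((Matrix.of fun j ℓ : Fin (n + 1) =>
        if (ℓ : ℕ) = n then (Polynomial.X : Polynomial ℝ) ^ (j : ℕ)
          else Polynomial.C (I j ℓ)).submatrix j.succAbove (Fin.last n).succAbove) =
        (Polynomial.C : ℝ →+* Polynomial ℝ).mapMatrix
          (Matrix.of fun a b : Fin n => I (j.succAbove a) b) := by
      ext1 a b
      simp [b.isLt.ne]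
    rw [hd, ← RingHom.map_det]
    beta_reduce
    rw [h]
    simp
  · intro v
    rw [Matrix.det_succ_column _ (Fin.last n), Finset.sum_range]
    refine Finset.sum_congr rfl fun j _ => ?_
    have h : Fin.ofNat (n + 1) (j : ℕ) = j := by ext; simp
    have hd : ((Matrix.of fun j ℓ : Fin (n + 1) =>
        if (ℓ : ℕ) = n then v j else I j ℓ).submatrix j.succAbove (Fin.last n).succAbove) =
          (Matrix.of fun a b : Fin n => I (j.succAbove a) b) := by
      ext1 a b
      simp [b.isLt.ne]
    rw [hd]
    beta_reduce
    rw [h]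
    simp
    ring

/-- One-sided form of the theorem: the last two conjuncts are the pairings of `p = ψ_n` with the
monomials `y^k`, `k ≤ n`. -/
lemma monic_orthogonal (I : ℕ → ℕ → ℝ) (Δ : ℕ → ℝ)
    (hΔ : ∀ k, Δ k = Matrix.det (Matrix.of fun j ℓ : Fin k => I j ℓ))
    (n : ℕ) (hn : Δ n ≠ 0) (p : Polynomial ℝ)
    (hp : p = Polynomial.C (Δ n)⁻¹ *
      Matrix.det (Matrix.of fun j ℓ : Fin (n + 1) =>
        if (ℓ : ℕ) = n then Polynomial.X ^ (j : ℕ) else Polynomial.C (I j ℓ))) :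
    p.Monic ∧ p.natDegree = n ∧
      (∀ k < n, ∑ j ∈ Finset.range (n + 1), p.coeff j * I j k = 0) ∧
      ∑ j ∈ Finset.range (n + 1), p.coeff j * I j n = Δ (n + 1) / Δ n := by
  obtain ⟨c, hcn, hc, hv⟩ := exists_cofactors I n
  rw [hc] at hp
  rw [← hΔ] at hcn
  have hcoeff : ∀ j, p.coeff j = if j < n + 1 then (Δ n)⁻¹ * c j else 0 := by
    intro j
    rw [hp, Polynomial.coeff_C_mul, Polynomial.finsetSum_coeff]
    simp only [Polynomial.coeff_C_mul_X_pow, Finset.sum_ite_eq, Finset.mem_range]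
    split_ifs <;> simp
  have htop : p.coeff n = 1 := by
    rw [hcoeff, if_pos n.lt_succ_self, hcn, inv_mul_cancel₀ hn]
  have hdeg : p.natDegree = n := by
    refine le_antisymm (Polynomial.natDegree_le_iff_coeff_eq_zero.2 fun j hj => ?_)
      (Polynomial.le_natDegree_of_ne_zero (by rw [htop]; exact one_ne_zero))
    rw [hcoeff, if_neg (by omega)]
  have hsum : ∀ v : ℕ → ℝ, ∑ j ∈ Finset.range (n + 1), p.coeff j * v j = (Δ n)⁻¹ *
      Matrix.det (Matrix.of fun j ℓ : Fin (n + 1) => if (ℓ : ℕ) = n then v j else I j ℓ) := by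
    intro v
    rw [← hv, Finset.mul_sum]
    refine Finset.sum_congr rfl fun j hj => ?_
    rw [hcoeff, if_pos (Finset.mem_range.1 hj), mul_assoc]
  refine ⟨by rw [Polynomial.Monic, Polynomial.leadingCoeff, hdeg, htop], hdeg, ?_, ?_⟩
  · intro k hk
    rw [hsum fun j => I j k]
    refine mul_eq_zero_of_right _ (Matrix.det_zero_of_column_eq
      (i := ⟨k, by omega⟩) (j := Fin.last n) (by simp [Fin.ext_iff, hk.ne]) fun j => ?_)
    simp [hk.ne]
  · rw [hsum fun j => I j n, hΔ (n + 1), div_eq_inv_mul]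
    congr 3
    ext j ℓ
    split_ifs with h
    · rw [h]
    · rfl

/-- Determinantal construction of the monic Cauchy biorthogonal polynomials and the
biorthogonality relation `B(ψ_n, φ_m) = δ_{nm} Δ_{n+1}/Δ_n`. -/
theorem biorthogonal_polys (I : ℕ → ℕ → ℝ) (Δ : ℕ → ℝ)
    (hΔ : ∀ k, Δ k = Matrix.det (Matrix.of fun j ℓ : Fin k => I j ℓ))
    (n m : ℕ) (hn : Δ n ≠ 0) (hm : Δ m ≠ 0)
    (ψ φ : Polynomial ℝ)
    (hψ : ψ = Polynomial.C (Δ n)⁻¹ *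
      Matrix.det (Matrix.of fun j ℓ : Fin (n + 1) =>
        if (ℓ : ℕ) = n then Polynomial.X ^ (j : ℕ) else Polynomial.C (I j ℓ)))
    (hφ : φ = Polynomial.C (Δ m)⁻¹ *
      Matrix.det (Matrix.of fun j ℓ : Fin (m + 1) =>
        if (j : ℕ) = m then Polynomial.X ^ (ℓ : ℕ) else Polynomial.C (I j ℓ)))
    (B : Polynomial ℝ → Polynomial ℝ → ℝ)
    (hB : ∀ f g : Polynomial ℝ, B f g =
      ∑ j ∈ Finset.range (f.natDegree + 1), ∑ k ∈ Finset.range (g.natDegree + 1),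
        f.coeff j * g.coeff k * I j k) :
    ψ.Monic ∧ ψ.natDegree = n ∧ φ.Monic ∧ φ.natDegree = m ∧
      B ψ φ = if n = m then Δ (n + 1) / Δ n else 0 := by
  have hΔt : ∀ k, Δ k = Matrix.det (Matrix.of fun j ℓ : Fin k => I ℓ j) := by
    intro k
    rw [hΔ, ← Matrix.det_transpose]
    rfl
  obtain ⟨mψ, dψ, oψ, nψ⟩ := monic_orthogonal I Δ hΔ n hn ψ hψ
  obtain ⟨mφ, dφ, oφ, -⟩ := monic_orthogonal (fun j ℓ => I ℓ j) Δ hΔt m hm φ (by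
    rw [hφ, ← Matrix.det_transpose]
    rfl)
  refine ⟨mψ, dψ, mφ, dφ, ?_⟩
  rw [hB, dψ, dφ]
  rcases lt_or_ge n m with h | h
  · rw [if_neg h.ne]
    refine Finset.sum_eq_zero fun j hj => ?_
    have := oφ j (by have := Finset.mem_range.1 hj; omega)
    simp only [mul_assoc, ← Finset.mul_sum, this, mul_zero]
  · have hswap : ∑ j ∈ Finset.range (n + 1), ∑ k ∈ Finset.range (m + 1),
        ψ.coeff j * φ.coeff k * I j k = ∑ k ∈ Finset.range (m + 1),
          φ.coeff k * ∑ j ∈ Finset.range (n + 1), ψ.coeff j * I j k := by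
      rw [Finset.sum_comm]
      refine Finset.sum_congr rfl fun k _ => ?_
      rw [Finset.mul_sum]
      exact Finset.sum_congr rfl fun j _ => by ring
    have hlow : ∑ k ∈ Finset.range m,
        φ.coeff k * ∑ j ∈ Finset.range (n + 1), ψ.coeff j * I j k = 0 :=
      Finset.sum_eq_zero fun k hk => by
        rw [oψ k (by have := Finset.mem_range.1 hk; omega), mul_zero]
    rw [hswap, Finset.sum_range_succ, hlow, zero_add]
    split_ifs with hnm
    · subst hnm
      have hlead : φ.coeff n = 1 := by
        rw [Polynomial.Monic, Polynomial.leadingCoeff, dφ] at mφ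
        exact mφ
      rw [nψ, hlead, one_mul]
    · rw [oψ m (by omega), mul_zero]
end

section
/- Let t ∈ ℂ with t ∉ {0, 1, 8/7, 8/5, 2}, and define z = −(1/210) · t⁴ / ((t−1)(t−8/7)(t−8/5)(t−2)) and y = −99/2 + 210/t − 288/t² + 128/t³. Then z ≠ 0 and y⁴ − ((z−2)/(2z))·y² + (3z+4)(3z−8)²/(432 z³) = 0. -/
/-!
In the coordinates `s = 1/t` and `w = 1/z` both functions become polynomials,
`w = -6 (1 - s) (7 - 8s) (5 - 8s) (1 - 2s)` and `y = -99/2 + 210 s - 288 s² + 128 s³`,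
and the curve reads `y⁴ - (1/2 - w) y² + (3 + 4w) (3 - 8w)² / 432 = 0`. The claim is
then a polynomial identity in `s`.
-/

/-- The rational uniformization of the genus-zero spectral curve of the
Cauchy–Laguerre three-chain. -/
theorem spectral_curve_uniformization (t : ℂ)
    (h0 : t ≠ 0) (h1 : t ≠ 1) (h2 : t ≠ 8 / 7) (h3 : t ≠ 8 / 5) (h4 : t ≠ 2)
    (z y : ℂ)
    (hz : z = -(1 / 210) * t ^ 4 / ((t - 1) * (t - 8 / 7) * (t - 8 / 5) * (t - 2)))
    (hy : y = -99 / 2 + 210 / t - 288 / t ^ 2 + 128 / t ^ 3) :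
    z ≠ 0 ∧
      y ^ 4 - (z - 2) / (2 * z) * y ^ 2 +
        (3 * z + 4) * (3 * z - 8) ^ 2 / (432 * z ^ 3) = 0 := by
  have hz0 : z ≠ 0 := by
    rw [hz]
    exact div_ne_zero (mul_ne_zero (by norm_num) (pow_ne_zero 4 h0))
      (mul_ne_zero (mul_ne_zero (mul_ne_zero (sub_ne_zero.2 h1) (sub_ne_zero.2 h2))
        (sub_ne_zero.2 h3)) (sub_ne_zero.2 h4))
  refine ⟨hz0, ?_⟩
  obtain ⟨s, hs⟩ : ∃ s, s = t⁻¹ := ⟨_, rfl⟩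
  obtain ⟨w, hw⟩ : ∃ w, w = z⁻¹ := ⟨_, rfl⟩
  have hys : y = -99 / 2 + 210 * s - 288 * s ^ 2 + 128 * s ^ 3 := by
    rw [hy, hs]
    simp only [div_eq_mul_inv, inv_pow]
  have hws : w = -6 * (1 - s) * (7 - 8 * s) * (5 - 8 * s) * (1 - 2 * s) := by
    rw [hw, hz, hs, inv_div]
    field_simp
    ring
  have hcurve : y ^ 4 - (z - 2) / (2 * z) * y ^ 2 +
      (3 * z + 4) * (3 * z - 8) ^ 2 / (432 * z ^ 3) =
      y ^ 4 - (1 / 2 - w) * y ^ 2 + (3 + 4 * w) * (3 - 8 * w) ^ 2 / 432 := by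
    rw [hw]
    field_simp
  rw [hcurve, hys, hws]
  ring
end

section
/- Let b = 64/27. For every real z > b, the integral ∫_{b}^{z} ( √(λ² + 2√(λ(λ−b)) − 2λ) + √(λ² − 2√(λ(λ−b)) − 2λ) ) · (1/λ) dλ is strictly positive; here both radicands are nonnegative for all λ ∈ [b, z]. Consequently ω_{12}(z) := −(1/2)·∫_{b}^{z} ( √(λ² + 2√(λ(λ−b)) − 2λ) + √(λ² − 2√(λ(λ−b)) − 2λ) ) (1/λ) dλ satisfies ω_{12}(z) < 0 for all z > b. -/
/-!
Squaring reduces nonnegativity of the smaller radicand to `4 l (l - 64/27) ≤ (l² - 2l)²`. The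
difference of the two sides is `l (l³ - 4l² + 256/27) = l (l - 8/3)² (l + 4/3)`, which is
nonnegative for `l > 0`. The larger radicand is at least `l² - 2l > 0` for `l ≥ 64/27 > 2`, so the
integrand is continuous and strictly positive on `[64/27, z]`, and its integral is positive.
-/

/-- The bound making the radicand with the minus sign nonnegative; equality holds at `l = 8/3`. -/
lemma two_mul_sqrt_le {l : ℝ} (hl : 64 / 27 ≤ l) :
    2 * Real.sqrt (l * (l - 64 / 27)) ≤ l ^ 2 - 2 * l := by
  have h : Real.sqrt (l * (l - 64 / 27)) ≤ (l ^ 2 - 2 * l) / 2 := by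
    apply Real.sqrt_le_iff.mpr
    refine ⟨by nlinarith, ?_⟩
    have key : 0 ≤ l * ((l - 8 / 3) ^ 2 * (l + 4 / 3)) := by
      have : 0 ≤ l := by linarith
      positivity
    nlinarith [key]
  linarith

/-- Strict negativity of `ω_{12}(z)` for `z > b = 64/27` for the Cauchy–Laguerre
three-chain. -/
theorem omega12_neg (z : ℝ) (hz : 64 / 27 < z) :
    (∀ l ∈ Set.Icc (64 / 27 : ℝ) z,
      0 ≤ l ^ 2 + 2 * Real.sqrt (l * (l - 64 / 27)) - 2 * l ∧
      0 ≤ l ^ 2 - 2 * Real.sqrt (l * (l - 64 / 27)) - 2 * l) ∧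
    (0 < ∫ l in (64 / 27 : ℝ)..z,
      (Real.sqrt (l ^ 2 + 2 * Real.sqrt (l * (l - 64 / 27)) - 2 * l) +
        Real.sqrt (l ^ 2 - 2 * Real.sqrt (l * (l - 64 / 27)) - 2 * l)) * (1 / l)) ∧
    (-(1 / 2) * ∫ l in (64 / 27 : ℝ)..z,
      (Real.sqrt (l ^ 2 + 2 * Real.sqrt (l * (l - 64 / 27)) - 2 * l) +
        Real.sqrt (l ^ 2 - 2 * Real.sqrt (l * (l - 64 / 27)) - 2 * l)) * (1 / l)) < 0 := by
  have hpos : 0 < ∫ l in (64 / 27 : ℝ)..z,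
      (Real.sqrt (l ^ 2 + 2 * Real.sqrt (l * (l - 64 / 27)) - 2 * l) +
        Real.sqrt (l ^ 2 - 2 * Real.sqrt (l * (l - 64 / 27)) - 2 * l)) * (1 / l) := by
    apply intervalIntegral.intervalIntegral_pos_of_pos_on _ _ hz
    · apply ContinuousOn.intervalIntegrable
      rw [Set.uIcc_of_le hz.le]
      refine ContinuousOn.mul (by fun_prop) (ContinuousOn.div (by fun_prop) (by fun_prop) ?_)
      intro l hl
      linarith [hl.1]
    · intro l hl
      have h0 : 0 < l := by linarith [hl.1]
      have h1 : 0 < l ^ 2 + 2 * Real.sqrt (l * (l - 64 / 27)) - 2 * l := by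
        nlinarith [Real.sqrt_nonneg (l * (l - 64 / 27)), hl.1]
      have h2 := Real.sqrt_pos.mpr h1
      positivity
  refine ⟨fun l hl => ?_, hpos, by linarith⟩
  have h1 := two_mul_sqrt_le hl.1
  have h2 := Real.sqrt_nonneg (l * (l - 64 / 27))
  constructor <;> linarith
end

section
/- Let a = −4/3 and b = 64/27. For every real z < a, the integral ∫_{z}^{a} √(λ² − 2√(λ(λ−b)) − 2λ) · (1/(−λ)) dλ is strictly positive; here λ(λ−b) > 0 and the radicand λ² − 2√(λ(λ−b)) − 2λ is nonnegative for all λ ∈ [z, a], vanishing only at λ = a. Consequently ω_{23}(z) := −∫_{z}^{a} √(λ² − 2√(λ(λ−b)) − 2λ)(1/|λ|) dλ satisfies ω_{23}(z) < 0 for all z < a. -/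
/-!
With `S = √(l (l - 64/27))`, the radicand is the difference of the nonnegative numbers `l² - 2l`
and `2S`, and the difference of their squares factors as
`(l² - 2l)² - 4 l (l - 64/27) = l (l + 4/3) (l - 8/3)²`.
For `l < -4/3` this is positive, and it vanishes at `l = -4/3`. The integrand is therefore
continuous on `[z, -4/3]` and positive on the open interval, so its integral is positive; on that
interval `|l| = -l`, so both integrals coincide.
-/

/-- At the branch point, `l (l - 64/27) = (20/9)²` and `l² - 2l = 40/9`. -/
lemma radicand_branch :
    (-4 / 3 : ℝ) ^ 2 - 2 * Real.sqrt (-4 / 3 * (-4 / 3 - 64 / 27)) - 2 * (-4 / 3) = 0 := by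
  have h : (-4 / 3 * (-4 / 3 - 64 / 27) : ℝ) = (20 / 9) ^ 2 := by norm_num
  rw [h, Real.sqrt_sq (by norm_num)]
  norm_num

lemma radicand_pos {l : ℝ} (hl : l < -4 / 3) :
    0 < l ^ 2 - 2 * Real.sqrt (l * (l - 64 / 27)) - 2 * l := by
  have hlt : Real.sqrt (l * (l - 64 / 27)) < (l ^ 2 - 2 * l) / 2 := by
    rw [Real.sqrt_lt' (by nlinarith)]
    have h1 : 0 < l * (l + 4 / 3) := mul_pos_of_neg_of_neg (by linarith) (by linarith)
    have h2 : 0 < (l - 8 / 3) ^ 2 := sq_pos_of_neg (by linarith)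
    nlinarith [mul_pos h1 h2]
  linarith

/-- Strict negativity of `ω_{23}(z)` for `z < a = −4/3` for the Cauchy–Laguerre
three-chain. -/
theorem omega23_neg (z : ℝ) (hz : z < -4 / 3) :
    (∀ l ∈ Set.Icc z (-4 / 3 : ℝ),
      0 < l * (l - 64 / 27) ∧
      0 ≤ l ^ 2 - 2 * Real.sqrt (l * (l - 64 / 27)) - 2 * l ∧
      (l ^ 2 - 2 * Real.sqrt (l * (l - 64 / 27)) - 2 * l = 0 ↔ l = -4 / 3)) ∧
    (0 < ∫ l in z..(-4 / 3 : ℝ),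
      Real.sqrt (l ^ 2 - 2 * Real.sqrt (l * (l - 64 / 27)) - 2 * l) * (1 / (-l))) ∧
    (-(∫ l in z..(-4 / 3 : ℝ),
      Real.sqrt (l ^ 2 - 2 * Real.sqrt (l * (l - 64 / 27)) - 2 * l) * (1 / |l|))) < 0 := by
  have hpos : 0 < ∫ l in z..(-4 / 3 : ℝ),
      Real.sqrt (l ^ 2 - 2 * Real.sqrt (l * (l - 64 / 27)) - 2 * l) * (1 / (-l)) := by
    refine intervalIntegral.intervalIntegral_pos_of_pos_on
      (ContinuousOn.intervalIntegrable ?_) (fun l hl => ?_) hz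
    · rw [Set.uIcc_of_le hz.le]
      refine ContinuousOn.mul (by fun_prop) (continuousOn_const.div continuousOn_neg ?_)
      intro l hl
      have hneg : -l > 0 := by linarith [hl.2]
      exact hneg.ne'
    · have hneg : 0 < -l := by linarith [hl.2]
      exact mul_pos (Real.sqrt_pos.2 (radicand_pos hl.2)) (one_div_pos.2 hneg)
  refine ⟨fun l hl => ⟨?_, ?_⟩, hpos, ?_⟩
  · exact mul_pos_of_neg_of_neg (by linarith [hl.2]) (by linarith [hl.2])
  · rcases hl.2.eq_or_lt with rfl | hlt
    · exact ⟨radicand_branch.ge, fun _ => rfl, fun _ => radicand_branch⟩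
    · exact ⟨(radicand_pos hlt).le, fun h => absurd h (radicand_pos hlt).ne',
        fun h => absurd h hlt.ne⟩
  · rw [neg_lt_zero]
    refine hpos.trans_eq (intervalIntegral.integral_congr fun l hl => ?_)
    rw [Set.uIcc_of_le hz.le] at hl
    have hneg : l < 0 := by linarith [hl.2]
    simp only [abs_of_neg hneg]
end

section
/- Let N ≥ 1 be an integer, let x_0, x_1, …, x_N be real numbers such that x_m − x_n ∉ ℤ for all m ≠ n, and let ε ∈ {0, 1} satisfy ε + N + 1 ≡ 0 (mod 2). Then ∑_{m=0}^{N} exp(iπ ε x_m) · ∏_{n ≠ m} ( sin(π(x_m − x_n)) )^{−1} = 0, the sines being nonzero by hypothesis. -/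
/-!
Put `w m = exp (iπ x m)` and `z m = w m ^ 2`. Then
`sin (π (x m - x n)) = (z m - z n) / (2 i w m w n)`, so that the `m`-th summand equals
`(2i)^N (∏ n, w n) · w m ^ (N - 1 + ε) / ∏ n ≠ m, (z m - z n)`.
The exponent `N - 1 + ε` is even, say `2k`, with `k < N`, and the sum becomes a constant times
`∑ m, z m ^ k / ∏ n ≠ m, (z m - z n)`. By Lagrange interpolation (`Lagrange.coeff_eq_sum`) at the
`N + 1` distinct nodes `z m`, this is the coefficient of `X ^ N` in `X ^ k`, which vanishes.
-/

/-- The reciprocal sine in terms of `exp (iπ a)` and `exp (iπ b)`. It also holds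
for `a - b ∈ ℤ`, where both sides are `0`. -/
lemma inv_sin_pi_sub (a b : ℝ) :
    ((Real.sin (Real.pi * (a - b)) : ℂ))⁻¹ =
      2 * Complex.I * Complex.exp (Complex.I * Real.pi * a) *
        Complex.exp (Complex.I * Real.pi * b) /
        (Complex.exp (Complex.I * Real.pi * a) ^ 2 -
          Complex.exp (Complex.I * Real.pi * b) ^ 2) := by
  have ha := Complex.exp_ne_zero (Complex.I * Real.pi * a)
  have hb := Complex.exp_ne_zero (Complex.I * Real.pi * b)
  have h : (Real.sin (Real.pi * (a - b)) : ℂ) =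
      (Complex.exp (Complex.I * Real.pi * a) ^ 2 - Complex.exp (Complex.I * Real.pi * b) ^ 2) /
      (2 * Complex.I * Complex.exp (Complex.I * Real.pi * a) *
        Complex.exp (Complex.I * Real.pi * b)) := by
    rw [Complex.ofReal_sin, Complex.sin]
    have e1 : -((Real.pi * (a - b) : ℝ) : ℂ) * Complex.I =
        Complex.I * Real.pi * b - Complex.I * Real.pi * a := by push_cast; ring
    have e2 : ((Real.pi * (a - b) : ℝ) : ℂ) * Complex.I =
        Complex.I * Real.pi * a - Complex.I * Real.pi * b := by push_cast; ring
    rw [e1, e2, Complex.exp_sub, Complex.exp_sub]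
    field_simp
    rw [Complex.I_sq]
    ring
  rw [h, inv_div]

/-- The sum of `v i ^ k / ∏ (v i - v j)` is the coefficient of `X ^ (#s - 1)` in `X ^ k`,
by Lagrange interpolation at the nodes `v i`. -/
lemma sum_pow_div_prod_sub_eq_zero (s : Finset ℕ) (v : ℕ → ℂ) (hv : Set.InjOn v s) (k : ℕ)
    (hk : k + 1 < s.card) :
    ∑ i ∈ s, v i ^ k / ∏ j ∈ s.erase i, (v i - v j) = 0 := by
  have h := Lagrange.coeff_eq_sum (s := s) (v := v) hv (P := Polynomial.X ^ k)
    (by rw [Polynomial.degree_X_pow]; exact_mod_cast (by omega : k < s.card))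
  rw [Polynomial.coeff_X_pow, if_neg (by omega)] at h
  simpa using h.symm

/-- The residue-sum trigonometric identity used in the evaluation of the bilinear
concomitant pairing of the Meijer-G–type solutions. -/
theorem residue_sum_identity (N : ℕ) (hN : 1 ≤ N) (x : ℕ → ℝ)
    (hx : ∀ m ≤ N, ∀ n ≤ N, m ≠ n → ∀ k : ℤ, x m - x n ≠ (k : ℝ))
    (ε : ℕ) (hε : ε = 0 ∨ ε = 1) (hpar : (ε + N + 1) % 2 = 0) :
    ∑ m ∈ Finset.range (N + 1),
      Complex.exp (Complex.I * (Real.pi : ℂ) * (ε : ℂ) * (x m : ℂ)) *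
        ∏ n ∈ (Finset.range (N + 1)).erase m,
          ((Real.sin (Real.pi * (x m - x n)) : ℂ))⁻¹ = 0 := by
  obtain ⟨k, hk⟩ : ∃ k, N + ε = 2 * k + 1 := ⟨(N + ε - 1) / 2, by omega⟩
  have hkN : k < N := by omega
  set w : ℕ → ℂ := fun m => Complex.exp (Complex.I * Real.pi * x m) with hw
  have hinj : Set.InjOn (fun m => w m ^ 2) (Finset.range (N + 1) : Finset ℕ) := by
    intro m hm n hn hmn
    simp only [Finset.coe_range, Set.mem_Iio] at hm hn
    by_contra hne
    simp only [hw, ← Complex.exp_nat_mul] at hmn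
    obtain ⟨j, hj⟩ := Complex.exp_eq_exp_iff_exists_int.1 hmn
    apply hx m (by omega) n (by omega) hne j
    have hpi : (2 * Real.pi * Complex.I : ℂ) ≠ 0 := Complex.two_pi_I_ne_zero
    have : (x m - x n : ℂ) = j := by
      apply mul_left_cancel₀ hpi
      push_cast at hj
      linear_combination hj
    exact_mod_cast this
  have hsum := sum_pow_div_prod_sub_eq_zero (Finset.range (N + 1)) _ hinj k (by simpa using hkN)
  have key : ∀ m ∈ Finset.range (N + 1),
      Complex.exp (Complex.I * (Real.pi : ℂ) * (ε : ℂ) * (x m : ℂ)) *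
        ∏ n ∈ (Finset.range (N + 1)).erase m, ((Real.sin (Real.pi * (x m - x n)) : ℂ))⁻¹ =
      ((2 * Complex.I) ^ N * ∏ n ∈ Finset.range (N + 1), w n) *
        ((w m ^ 2) ^ k / ∏ n ∈ (Finset.range (N + 1)).erase m, (w m ^ 2 - w n ^ 2)) := by
    intro m hm
    have hexp : Complex.exp (Complex.I * (Real.pi : ℂ) * (ε : ℂ) * (x m : ℂ)) = w m ^ ε := by
      rw [hw, ← Complex.exp_nat_mul]
      congr 1
      ring
    have hprod : ∏ n ∈ (Finset.range (N + 1)).erase m,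
        ((Real.sin (Real.pi * (x m - x n)) : ℂ))⁻¹ =
        (2 * Complex.I * w m) ^ N * (∏ n ∈ (Finset.range (N + 1)).erase m, w n) /
          ∏ n ∈ (Finset.range (N + 1)).erase m, (w m ^ 2 - w n ^ 2) := by
      simp_rw [inv_sin_pi_sub]
      rw [Finset.prod_div_distrib, Finset.prod_mul_distrib, Finset.prod_const,
        Finset.card_erase_of_mem hm, Finset.card_range, Nat.add_sub_cancel]
    rw [hexp, hprod, ← Finset.mul_prod_erase _ w hm]
    -- One factor `w m` of `w m ^ (N + ε)` completes the product over `n ≠ m`.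
    have hpow : w m ^ ε * w m ^ N = w m * (w m ^ 2) ^ k := by
      rw [← pow_add, ← pow_mul, ← pow_succ', add_comm, hk]
    rw [mul_pow, ← mul_div_assoc, ← mul_div_assoc]
    congr 1
    linear_combination (2 * Complex.I) ^ N *
      (∏ n ∈ (Finset.range (N + 1)).erase m, w n) * hpow
  rw [Finset.sum_congr rfl key, ← Finset.mul_sum, hsum, mul_zero]
end

section
/- For every real β > 0, the cubic polynomial P_β(q) = 27(1+β)² q³ − 16(9β² + 9β + 4) q² + 16β²(β² + β + 8) q − 64β⁴ has exactly one real root, and this root is strictly positive. -/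
/-!
As a polynomial in `β`, the discriminant of the cubic is `-4096 β ^ 5` times a polynomial of
degree nine all of whose coefficients are positive, so it is negative for `β > 0`. A real cubic
with two distinct real roots has all its roots real, hence discriminant a square
(`discr_nonneg_of_two_roots`), so there is at most one root. A root exists in `[0, 16 / 3]` by
the intermediate value theorem, and for `q ≤ 0` every term of the cubic is nonpositive, the
constant term strictly.
-/

/-- Two distinct real roots of a real cubic force the third one, given by Vieta's formula, to be
real; the discriminant is then `(a ^ 2 (x - y) (x - z) (y - z)) ^ 2`. -/
lemma discr_nonneg_of_two_roots {a b c d x y : ℝ} (ha : a ≠ 0) (hxy : x ≠ y)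
    (hx : a * x ^ 3 + b * x ^ 2 + c * x + d = 0)
    (hy : a * y ^ 3 + b * y ^ 2 + c * y + d = 0) :
    0 ≤ b ^ 2 * c ^ 2 - 4 * a * c ^ 3 - 4 * b ^ 3 * d - 27 * a ^ 2 * d ^ 2
      + 18 * a * b * c * d := by
  obtain ⟨z, hz⟩ : ∃ z : ℝ, b = -a * (x + y + z) := ⟨-b / a - x - y, by field_simp; ring⟩
  have hc : c = a * (x * y + x * z + y * z) := by
    have h : (x - y) * (c - a * (x * y + x * z + y * z)) = 0 := by
      subst hz
      linear_combination hx - hy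
    rcases mul_eq_zero.mp h with h | h
    · exact absurd (sub_eq_zero.mp h) hxy
    · exact sub_eq_zero.mp h
  have hd : d = -a * (x * y * z) := by
    subst hz hc
    linear_combination hx
  have key : b ^ 2 * c ^ 2 - 4 * a * c ^ 3 - 4 * b ^ 3 * d - 27 * a ^ 2 * d ^ 2
      + 18 * a * b * c * d = (a ^ 2 * ((x - y) * (x - z) * (y - z))) ^ 2 := by
    subst hz hc hd
    ring
  rw [key]
  positivity

/-- The cubic determining the endpoint `q(β)` of the equilibrium support has exactly one
real root, which is strictly positive. -/
theorem cubic_unique_positive_root (β : ℝ) (hβ : 0 < β) :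
    (∃! q : ℝ, 27 * (1 + β) ^ 2 * q ^ 3 - 16 * (9 * β ^ 2 + 9 * β + 4) * q ^ 2 +
      16 * β ^ 2 * (β ^ 2 + β + 8) * q - 64 * β ^ 4 = 0) ∧
    ∀ q : ℝ, 27 * (1 + β) ^ 2 * q ^ 3 - 16 * (9 * β ^ 2 + 9 * β + 4) * q ^ 2 +
      16 * β ^ 2 * (β ^ 2 + β + 8) * q - 64 * β ^ 4 = 0 → 0 < q := by
  have hpos : ∀ q : ℝ, 27 * (1 + β) ^ 2 * q ^ 3 - 16 * (9 * β ^ 2 + 9 * β + 4) * q ^ 2 +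
      16 * β ^ 2 * (β ^ 2 + β + 8) * q - 64 * β ^ 4 = 0 → 0 < q := by
    intro q hq
    by_contra! hneg
    obtain ⟨r, rfl⟩ : ∃ r, q = -r := ⟨-q, by ring⟩
    have hr : 0 ≤ r := by linarith
    have h : 0 < 27 * (1 + β) ^ 2 * r ^ 3 + 16 * (9 * β ^ 2 + 9 * β + 4) * r ^ 2 +
      16 * β ^ 2 * (β ^ 2 + β + 8) * r + 64 * β ^ 4 := by positivity
    linarith
  refine ⟨?_, hpos⟩
  obtain ⟨q, -, hq⟩ : ∃ q ∈ Set.Icc (0 : ℝ) (16 / 3),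
      27 * (1 + β) ^ 2 * q ^ 3 - 16 * (9 * β ^ 2 + 9 * β + 4) * q ^ 2 +
      16 * β ^ 2 * (β ^ 2 + β + 8) * q - 64 * β ^ 4 = 0 := by
    refine intermediate_value_Icc (by norm_num) (Continuous.continuousOn (by fun_prop)) ⟨?_, ?_⟩
    · norm_num
      positivity
    · -- At `q = 16 / 3` the leading term dominates the quadratic one and the linear term
      -- dominates the constant one, so all coefficients in `β` are nonnegative.
      rw [← sub_nonneg]
      ring_nf
      positivity
  refine ⟨q, hq, fun p hp => ?_⟩
  by_contra hne
  have hD := discr_nonneg_of_two_roots (a := 27 * (1 + β) ^ 2)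
    (b := -(16 * (9 * β ^ 2 + 9 * β + 4))) (c := 16 * β ^ 2 * (β ^ 2 + β + 8))
    (d := -(64 * β ^ 4)) (by positivity) hne (by linear_combination hp)
    (by linear_combination hq)
  have hneg : 0 < 4096 * β ^ 5 * (32768 + 173056 * β + 318304 * β ^ 2 + 256955 * β ^ 3
      + 127224 * β ^ 4 + 59166 * β ^ 5 + 15012 * β ^ 6 + 4563 * β ^ 7 + 540 * β ^ 8
      + 108 * β ^ 9) := by positivity
  linarith
end
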